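/- Let v ∈ ℂ^m ⊗ ℂ^n be a unit vector with Schmidt coefficients α₁ ≥ α₂ ≥ … ≥ α_{min(m,n)} ≥ 0 and fix 1 ≤ k ≤ min(m,n). Define the norm ‖w‖_{s(k)} := sup{ |⟨u, w⟩| : u a unit vector in ℂ^m ⊗ ℂ^n with SR(u) ≤ k }. Let r be the largest index with 1 ≤ r < k such that α_r > (Σ_{i=r+1}^{min(m,n)} α_i)/(k−r), taking r = 0 if no such index exists, and set α̃ := (Σ_{i=r+1}^{min(m,n)} α_i)/(k−r). Then the dual norm satisfies ‖v‖_{s(k)}° = sqrt( Σ_{i=1}^r α_i² + (k−r)α̃² ). -/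

import Mathlib

open scoped Kronecker ComplexOrder
open Matrix

namespace Ent

variable {ι κ : Type*} [Fintype ι] [Fintype κ]

/-- Inner product ⟨v,w⟩ = Σᵢ conj(v i) * (w i) (conjugate-linear in the first argument). -/
noncomputable def vinner (v w : ι → ℂ) : ℂ := dotProduct (star v) w

/-- An elementary (product) tensor a ⊗ b in ℂ^ι ⊗ ℂ^κ. -/
def prodVec (a : ι → ℂ) (b : κ → ℂ) : ι × κ → ℂ := fun p => a p.1 * b p.2

/-- `v` has Schmidt rank at most `k`. -/
def SchmidtRankLE (k : ℕ) (v : ι × κ → ℂ) : Prop :=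
  ∃ (a : Fin k → ι → ℂ) (b : Fin k → κ → ℂ), v = ∑ i, prodVec (a i) (b i)

/-- The rank-one operator |v⟩⟨w|. -/
noncomputable def ketBra (v : ι → ℂ) (w : κ → ℂ) : Matrix ι κ ℂ :=
  Matrix.vecMulVec v (star w)

/-- A finite family of vectors is orthonormal. -/
def Orthonormal' {N : Type*} [DecidableEq N] (v : N → ι → ℂ) : Prop :=
  ∀ i j, vinner (v i) (v j) = if i = j then 1 else 0

/-- The S(k)-norm of `X ∈ M_ι ⊗ M_κ`. -/
noncomputable def SkNorm (k : ℕ) (X : Matrix (ι × κ) (ι × κ) ℂ) : ℝ :=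
  sSup { r | ∃ v w : ι × κ → ℂ, vinner v v = 1 ∧ vinner w w = 1 ∧
    SchmidtRankLE k v ∧ SchmidtRankLE k w ∧
    r = ‖vinner v (X.mulVec w)‖ }

/-- The product numerical radius r_k^⊗. -/
noncomputable def prodRad (k : ℕ) (Y : Matrix (ι × κ) (ι × κ) ℂ) : ℝ :=
  sSup { r | ∃ v : ι × κ → ℂ, vinner v v = 1 ∧ SchmidtRankLE k v ∧
    r = ‖vinner v (Y.mulVec v)‖ }

/-- The norm ‖·‖_{γ,k}. -/
noncomputable def gammaNorm (k : ℕ) (X : Matrix (ι × κ) (ι × κ) ℂ) : ℝ :=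
  sInf { r | ∃ (N : ℕ) (c : Fin N → ℂ) (v w : Fin N → (ι × κ → ℂ)),
    (∀ i, vinner (v i) (v i) = 1 ∧ vinner (w i) (w i) = 1 ∧
      SchmidtRankLE k (v i) ∧ SchmidtRankLE k (w i)) ∧
    X = ∑ i, c i • ketBra (v i) (w i) ∧
    r = ∑ i, ‖c i‖ }

/-- `ρ` is a density matrix. -/
def IsDensity (ρ : Matrix ι ι ℂ) : Prop := ρ.PosSemidef ∧ ρ.trace = 1

/-- `ρ` has Schmidt number at most `k`: it is a convex combination of projections onto
unit vectors of Schmidt rank at most `k`. -/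
def SchmidtNumLE (k : ℕ) (ρ : Matrix (ι × κ) (ι × κ) ℂ) : Prop :=
  ∃ (N : ℕ) (p : Fin N → ℝ) (v : Fin N → (ι × κ → ℂ)),
    (∀ i, 0 ≤ p i ∧ vinner (v i) (v i) = 1 ∧ SchmidtRankLE k (v i)) ∧
    (∑ i, p i) = 1 ∧ ρ = ∑ i, p i • ketBra (v i) (v i)

/-- The robustness norm R_k on Hermitian operators. -/
noncomputable def Rk (k : ℕ) (Y : Matrix (ι × κ) (ι × κ) ℂ) : ℝ :=
  sInf { r | ∃ (c₁ c₂ : ℝ) (ρ₁ ρ₂ : Matrix (ι × κ) (ι × κ) ℂ),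
    0 ≤ c₁ ∧ 0 ≤ c₂ ∧ IsDensity ρ₁ ∧ IsDensity ρ₂ ∧
    SchmidtNumLE k ρ₁ ∧ SchmidtNumLE k ρ₂ ∧
    Y = c₁ • ρ₁ - c₂ • ρ₂ ∧ r = c₁ + c₂ }

/-- `Y` is k-block positive: ⟨v|Y|v⟩ ≥ 0 for every unit vector of Schmidt rank at most `k`. -/
def KBlockPos (k : ℕ) (Y : Matrix (ι × κ) (ι × κ) ℂ) : Prop :=
  ∀ v : ι × κ → ℂ, vinner v v = 1 → SchmidtRankLE k v →
    0 ≤ (vinner v (Y.mulVec v)).re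

/-- Dual of a norm on matrices, w.r.t. the Hilbert–Schmidt inner product ⟨W,X⟩ = Tr(Wᴴ X). -/
noncomputable def dualNormM (f : Matrix ι κ ℂ → ℝ) (X : Matrix ι κ ℂ) : ℝ :=
  sSup { r | ∃ W : Matrix ι κ ℂ, f W ≤ 1 ∧ r = ‖(Wᴴ * X).trace‖ }

/-- Dual of a norm, computed in the real Hilbert space of Hermitian matrices with the
Hilbert–Schmidt inner product ⟨W,Y⟩ = Tr(WY). -/
noncomputable def dualNormHerm (f : Matrix ι ι ℂ → ℝ) (Y : Matrix ι ι ℂ) : ℝ :=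
  sSup { r | ∃ W : Matrix ι ι ℂ, W.IsHermitian ∧ f W ≤ 1 ∧ r = |((W * Y).trace).re| }

/-- The Frobenius norm of a matrix. -/
noncomputable def frobNorm (X : Matrix ι κ ℂ) : ℝ :=
  Real.sqrt (∑ i, ∑ j, Complex.normSq (X i j))

/-- The (k,2)-norm: ‖X‖_{(k,2)} = sup { |Tr(XY)| : rank Y ≤ k, ‖Y‖_F ≤ 1 }. -/
noncomputable def kNorm (k : ℕ) (X : Matrix ι κ ℂ) : ℝ :=
  sSup { r | ∃ Y : Matrix κ ι ℂ, Y.rank ≤ k ∧ frobNorm Y ≤ 1 ∧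
    r = ‖(X * Y).trace‖ }

/-- The trace norm: the sum of the singular values, i.e. of the square roots of the
eigenvalues of Xᴴ X. -/
noncomputable def traceNorm [DecidableEq κ] (X : Matrix ι κ ℂ) : ℝ :=
  ∑ i, Real.sqrt ((Matrix.isHermitian_conjTranspose_mul_self X).eigenvalues i)

/-- The s(k) vector norm: sup of |⟨u,w⟩| over unit vectors u of Schmidt rank at most k. -/
noncomputable def skVecNorm (k : ℕ) (w : ι × κ → ℂ) : ℝ :=
  sSup { r | ∃ u : ι × κ → ℂ, vinner u u = 1 ∧ SchmidtRankLE k u ∧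
    r = ‖vinner u w‖ }

/-- Dual of a norm on vectors. -/
noncomputable def dualNormV (f : (ι × κ → ℂ) → ℝ) (v : ι × κ → ℂ) : ℝ :=
  sSup { r | ∃ w : ι × κ → ℂ, f w ≤ 1 ∧ r = ‖vinner w v‖ }

/-- The realignment map, L(X)_{(i,k),(j,l)} = X_{(i,j),(k,l)}. -/
def realign {m n : ℕ} (X : Matrix (Fin m × Fin n) (Fin m × Fin n) ℂ) :
    Matrix (Fin m × Fin m) (Fin n × Fin n) ℂ :=
  fun p q => X (p.1, q.1) (p.2, q.2)

/-- The projective tensor norm on M_{m,n} ⊗ M_{m,n}. -/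
noncomputable def projNorm {m n : ℕ} (Z : Matrix (Fin m × Fin m) (Fin n × Fin n) ℂ) : ℝ :=
  sInf { r | ∃ (N : ℕ) (A B : Fin N → Matrix (Fin m) (Fin n) ℂ),
    Z = ∑ i, A i ⊗ₖ B i ∧ r = ∑ i, traceNorm (A i) * traceNorm (B i) }

/-!
Let `H` be the set of the `r` largest coefficients, `q = k - r`, `t = α̃`, and let `β` agree with
`α` on `H` and be constantly `t` elsewhere. The choice of `r` gives `t ≤ α i` on `H` and `α i ≤ t`
off `H`, while `∑_{i ∉ H} α i = q t` by definition of `t`. Put `F = ∑_{i ∈ H} α i ^ 2 + q t ^ 2`.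

Upper bound: let `w` have `s(k)`-norm at most `1`. As the coefficients off `H` lie in `[0, t]` and
sum to `q t`, a real linear functional of them does not decrease when they are replaced by `t` on
the `q` best indices and `0` on the others. So `|⟨w, v⟩| ≤ |⟨w, u⟩|` for the vector `u` whose
Schmidt coefficients are `β` on `k` indices and `0` elsewhere; its squared norm is `F`.

Lower bound: the dual norm is attained at `w = F^{-1/2} ∑ β i a i ⊗ b i`, for which
`⟨w, v⟩ = F^{-1/2} ∑ β i α i = √F`. For a unit vector `u` in `E ⊗ ℂ^κ` with `dim E ≤ k`,
Cauchy-Schwarz gives `|⟨u, ∑ β i a i ⊗ b i⟩|² ≤ ∑ x i * β i ^ 2`, where `x i = ‖P_E (a i)‖²`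
satisfies `0 ≤ x i ≤ 1` and `∑ x i ≤ k`. Since `β ≥ t` on `H` and `β = t` elsewhere, this is at
most `F`.
-/

open WithLp (toLp)

section WeightedSums

variable {σ R : Type*} [CommRing R] [LinearOrder R] [IsStrictOrderedRing R]

theorem sum_mul_le_mul_sum_of_sign [DecidableEq σ] {S I : Finset σ} (hI : I ⊆ S) {x y : σ → R}
    {t : R} (hx0 : ∀ i ∈ S \ I, 0 ≤ x i) (hxt : ∀ i ∈ I, x i ≤ t)
    (hy0 : ∀ i ∈ I, 0 ≤ y i) (hy : ∀ i ∈ S \ I, y i ≤ 0) :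
    ∑ i ∈ S, x i * y i ≤ t * ∑ i ∈ I, y i := by
  have outside : ∑ i ∈ S \ I, x i * y i ≤ 0 :=
    Finset.sum_nonpos fun i hi => mul_nonpos_of_nonneg_of_nonpos (hx0 i hi) (hy i hi)
  have inside : ∑ i ∈ I, x i * y i ≤ t * ∑ i ∈ I, y i := by
    rw [Finset.mul_sum]
    exact Finset.sum_le_sum fun i hi => mul_le_mul_of_nonneg_right (hxt i hi) (hy0 i hi)
  rw [← Finset.sum_sdiff hI]
  linarith

theorem sum_mul_le_of_threshold [DecidableEq σ] {S I : Finset σ} (hI : I ⊆ S) {x z : σ → R}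
    {t c : R} (hx0 : ∀ i ∈ S \ I, 0 ≤ x i) (hxt : ∀ i ∈ I, x i ≤ t)
    (hzI : ∀ i ∈ I, c ≤ z i) (hz : ∀ i ∈ S \ I, z i ≤ c) :
    ∑ i ∈ S, x i * z i ≤ t * ∑ i ∈ I, z i + c * (∑ i ∈ S, x i - t * I.card) := by
  have shifted := sum_mul_le_mul_sum_of_sign hI (y := fun i => z i - c) hx0 hxt
    (fun i hi => sub_nonneg.2 (hzI i hi)) (fun i hi => sub_nonpos.2 (hz i hi))
  simp only [mul_sub, Finset.sum_sub_distrib, ← Finset.sum_mul, Finset.sum_const,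
    nsmul_eq_mul] at shifted
  linarith

theorem exists_subset_card_eq_forall_sdiff_le [DecidableEq σ] {β : Type*} [LinearOrder β]
    (S : Finset σ) (z : σ → β) {q : ℕ} (hq : q ≤ S.card) :
    ∃ I ⊆ S, I.card = q ∧ ∀ i ∈ I, ∀ j ∈ S \ I, z j ≤ z i := by
  induction q with
  | zero => exact ⟨∅, by simp⟩
  | succ q ih =>
    obtain ⟨I, hIS, hcard, hI⟩ := ih (by lia)
    have hne : (S \ I).Nonempty := by
      rw [← Finset.card_pos, Finset.card_sdiff_of_subset hIS]
      lia
    obtain ⟨l, hl, hmax⟩ := Finset.exists_max_image (S \ I) z hne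
    obtain ⟨hlS, hlI⟩ := Finset.mem_sdiff.1 hl
    refine ⟨insert l I, Finset.insert_subset hlS hIS,
      by rw [Finset.card_insert_of_notMem hlI, hcard], fun i hi j hj => ?_⟩
    have hj' : j ∈ S \ I :=
      Finset.sdiff_subset_sdiff Finset.Subset.rfl (Finset.subset_insert l I) hj
    rcases Finset.mem_insert.1 hi with rfl | hi
    · exact hmax j hj'
    · exact hI i hi j hj'

theorem exists_subset_card_eq_sum_mul_le {S : Finset σ} {q : ℕ}
    (hq : q ≤ S.card) {x : σ → R} {t : R} (hx0 : ∀ i ∈ S, 0 ≤ x i) (hxt : ∀ i ∈ S, x i ≤ t)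
    (hsum : ∑ i ∈ S, x i = q * t) (z : σ → R) :
    ∃ I ⊆ S, I.card = q ∧ ∑ i ∈ S, x i * z i ≤ t * ∑ i ∈ I, z i := by
  classical
  obtain ⟨I, hIS, rfl, hI⟩ := exists_subset_card_eq_forall_sdiff_le S z hq
  refine ⟨I, hIS, rfl, ?_⟩
  rcases I.eq_empty_or_nonempty with rfl | hne
  · have hx : ∀ i ∈ S, x i = 0 := (Finset.sum_eq_zero_iff_of_nonneg hx0).1 (by simpa using hsum)
    rw [Finset.sum_eq_zero fun i hi => by rw [hx i hi, zero_mul]]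
    simp
  · obtain ⟨l, hl, hmin⟩ := Finset.exists_min_image I z hne
    have h := sum_mul_le_of_threshold hIS (fun i hi => hx0 i (Finset.mem_sdiff.1 hi).1)
      (fun i hi => hxt i (hIS hi)) hmin (hI l hl)
    rwa [hsum, mul_comm t (I.card : R), sub_self, mul_zero, add_zero] at h

end WeightedSums

section Flattening

variable {σ : Type*} [DecidableEq σ]

theorem sum_piecewise_const {β M : Type*} [AddCommMonoid M] {H s : Finset σ} (hs : H ⊆ s)
    (x : σ → β) (t : β) (φ : σ → β → M) :
    ∑ i ∈ s, φ i (H.piecewise x (fun _ => t) i) =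
      ∑ i ∈ H, φ i (x i) + ∑ i ∈ s \ H, φ i t := by
  rw [← Finset.sum_sdiff hs, add_comm]
  congr 1
  · exact Finset.sum_congr rfl fun i hi => by rw [Finset.piecewise_eq_of_mem _ _ _ hi]
  · exact Finset.sum_congr rfl fun i hi => by
      rw [Finset.piecewise_eq_of_notMem _ _ _ (Finset.mem_sdiff.1 hi).2]

variable {R : Type*} {H : Finset σ} {α : σ → R} {t : R} {q : ℕ}

theorem sum_piecewise_const_sq [CommSemiring R] {s : Finset σ} (hs : H ⊆ s)
    (hcard : s.card = H.card + q) :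
    ∑ i ∈ s, H.piecewise α (fun _ => t) i ^ 2 = ∑ i ∈ H, α i ^ 2 + q * t ^ 2 := by
  rw [sum_piecewise_const hs α t fun _ y => y ^ 2, Finset.sum_const,
    Finset.card_sdiff_of_subset hs, hcard, Nat.add_sub_cancel_left, nsmul_eq_mul]

variable [Fintype σ]

theorem sum_piecewise_const_mul_self [CommSemiring R] (hsum : ∑ i ∈ Hᶜ, α i = q * t) :
    ∑ i, H.piecewise α (fun _ => t) i * α i = ∑ i ∈ H, α i ^ 2 + q * t ^ 2 := by
  rw [sum_piecewise_const H.subset_univ α t fun i y => y * α i, ← Finset.compl_eq_univ_sdiff,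
    ← Finset.mul_sum, hsum]
  simp only [sq]
  ring

variable [CommRing R] [LinearOrder R] [IsStrictOrderedRing R]

theorem exists_sum_mul_le_sum_piecewise_const (hq : q ≤ Hᶜ.card) (hα0 : ∀ i ∈ Hᶜ, 0 ≤ α i)
    (hαt : ∀ i ∈ Hᶜ, α i ≤ t) (hsum : ∑ i ∈ Hᶜ, α i = q * t) (z : σ → R) :
    ∃ s, H ⊆ s ∧ s.card = H.card + q ∧
      ∑ i, α i * z i ≤ ∑ i ∈ s, H.piecewise α (fun _ => t) i * z i := by
  obtain ⟨I, hI, rfl, hle⟩ := exists_subset_card_eq_sum_mul_le hq hα0 hαt hsum z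
  have hdisj : Disjoint H I := disjoint_compl_right.mono_right hI
  refine ⟨H ∪ I, Finset.subset_union_left, Finset.card_union_of_disjoint hdisj, ?_⟩
  rw [sum_piecewise_const Finset.subset_union_left α t fun i y => y * z i,
    Finset.union_sdiff_cancel_left hdisj, ← Finset.mul_sum, ← Finset.sum_add_sum_compl H]
  gcongr

theorem sum_mul_piecewise_const_sq_le {x : σ → R} (hx0 : ∀ i, 0 ≤ x i) (hx1 : ∀ i, x i ≤ 1)
    (hsum : ∑ i, x i ≤ H.card + q) (ht : 0 ≤ t) (htα : ∀ i ∈ H, t ≤ α i) :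
    ∑ i, x i * H.piecewise α (fun _ => t) i ^ 2 ≤ ∑ i ∈ H, α i ^ 2 + q * t ^ 2 := by
  have h := sum_mul_le_of_threshold (z := fun i => H.piecewise α (fun _ => t) i ^ 2) (c := t ^ 2)
    H.subset_univ (fun i _ => hx0 i) (fun i _ => hx1 i)
    (fun i hi => by
      rw [Finset.piecewise_eq_of_mem _ _ _ hi]
      exact pow_le_pow_left₀ ht (htα i hi) 2)
    (fun i hi => by rw [Finset.piecewise_eq_of_notMem _ _ _ (Finset.mem_sdiff.1 hi).2])
  have hH := sum_piecewise_const_sq (α := α) (t := t) (q := 0) (Finset.Subset.refl H) rfl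
  rw [Nat.cast_zero, zero_mul, add_zero] at hH
  rw [hH, one_mul, one_mul] at h
  nlinarith [sq_nonneg t]

end Flattening

section Vinner

theorem vinner_eq_inner (v w : ι → ℂ) : vinner v w = inner ℂ (toLp 2 v) (toLp 2 w) := by
  rw [EuclideanSpace.inner_eq_star_dotProduct, vinner, dotProduct_comm]

theorem vinner_self_eq_norm_sq (v : ι → ℂ) : vinner v v = ((‖toLp 2 v‖ ^ 2 : ℝ) : ℂ) := by
  rw [vinner_eq_inner, inner_self_eq_norm_sq_to_K]
  simp

theorem vinner_self_eq_one_iff {v : ι → ℂ} : vinner v v = 1 ↔ ‖toLp 2 v‖ = 1 := by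
  rw [vinner_self_eq_norm_sq, ← Complex.ofReal_one, Complex.ofReal_inj,
    pow_eq_one_iff_of_nonneg (norm_nonneg _) two_ne_zero]

theorem norm_vinner_comm (v w : ι → ℂ) : ‖vinner v w‖ = ‖vinner w v‖ := by
  simp only [vinner_eq_inner, norm_inner_symm]

theorem norm_vinner_le (v w : ι → ℂ) : ‖vinner v w‖ ≤ ‖toLp 2 v‖ * ‖toLp 2 w‖ := by
  rw [vinner_eq_inner]
  exact norm_inner_le_norm _ _

theorem vinner_sum_left {τ : Type*} (s : Finset τ) (f : τ → ι → ℂ) (w : ι → ℂ) :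
    vinner (∑ i ∈ s, f i) w = ∑ i ∈ s, vinner (f i) w := by
  simp only [vinner, star_sum, sum_dotProduct]

theorem vinner_sum_right {τ : Type*} (s : Finset τ) (f : τ → ι → ℂ) (w : ι → ℂ) :
    vinner w (∑ i ∈ s, f i) = ∑ i ∈ s, vinner w (f i) := by
  simp only [vinner, dotProduct_sum]

theorem vinner_smul_left (c : ℂ) (v w : ι → ℂ) : vinner (c • v) w = star c * vinner v w := by
  simp only [vinner, star_smul, smul_dotProduct, smul_eq_mul]

theorem vinner_smul_right (c : ℂ) (v w : ι → ℂ) : vinner v (c • w) = c * vinner v w := by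
  simp only [vinner, dotProduct_smul, smul_eq_mul]

theorem smul_prodVec {ι κ : Type*} (c : ℂ) (a : ι → ℂ) (b : κ → ℂ) :
    prodVec (c • a) b = c • prodVec a b := by
  ext p
  exact mul_assoc c (a p.1) (b p.2)

theorem vinner_prodVec (a c : ι → ℂ) (b d : κ → ℂ) :
    vinner (prodVec a b) (prodVec c d) = vinner a c * vinner b d := by
  simp only [vinner, dotProduct, prodVec, Fintype.sum_prod_type, Finset.sum_mul_sum,
    Pi.star_apply, star_mul', mul_mul_mul_comm]

end Vinner

namespace Orthonormal'

variable {τ : Type*} [DecidableEq τ] {e : τ → ι → ℂ}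

theorem orthonormal_toLp (he : Orthonormal' e) : Orthonormal ℂ fun i => toLp 2 (e i) :=
  orthonormal_iff_ite.2 fun i j => by rw [← vinner_eq_inner, he i j]

theorem norm_eq_one (he : Orthonormal' e) (i : τ) : ‖toLp 2 (e i)‖ = 1 :=
  he.orthonormal_toLp.1 i

theorem sum_norm_vinner_sq_le (he : Orthonormal' e) (s : Finset τ) (x : ι → ℂ) :
    ∑ i ∈ s, ‖vinner (e i) x‖ ^ 2 ≤ ‖toLp 2 x‖ ^ 2 := by
  simpa only [vinner_eq_inner] using he.orthonormal_toLp.sum_inner_products_le (toLp 2 x)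

theorem vinner_sum_smul (he : Orthonormal' e) (s : Finset τ) (c d : τ → ℂ) :
    vinner (∑ i ∈ s, c i • e i) (∑ i ∈ s, d i • e i) = ∑ i ∈ s, star (c i) * d i := by
  simpa only [vinner_eq_inner, WithLp.toLp_sum, WithLp.toLp_smul, RCLike.star_def] using
    he.orthonormal_toLp.inner_sum c d s

theorem norm_sum_smul_sq (he : Orthonormal' e) (s : Finset τ) (c : τ → ℂ) :
    ‖toLp 2 (∑ i ∈ s, c i • e i)‖ ^ 2 = ∑ i ∈ s, ‖c i‖ ^ 2 := by
  have h := vinner_self_eq_norm_sq (∑ i ∈ s, c i • e i)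
  rw [he.vinner_sum_smul] at h
  simp only [RCLike.star_def, Complex.conj_mul'] at h
  exact_mod_cast h.symm

protected theorem prodVec {b : τ → κ → ℂ} (he : Orthonormal' e) (hb : Orthonormal' b) :
    Orthonormal' fun i => prodVec (e i) (b i) := fun i j => by
  rw [vinner_prodVec, he i j, hb i j, ite_mul_ite, one_mul, mul_zero]

variable [Fintype τ]

theorem vinner_sum_prodVec (he : Orthonormal' e) (f g : τ → κ → ℂ) :
    vinner (∑ l, prodVec (e l) (f l)) (∑ l, prodVec (e l) (g l)) = ∑ l, vinner (f l) (g l) := by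
  simp [vinner_sum_left, vinner_sum_right, vinner_prodVec, he _ _]

theorem norm_sum_prodVec_sq (he : Orthonormal' e) (f : τ → κ → ℂ) :
    ‖toLp 2 (∑ l, prodVec (e l) (f l))‖ ^ 2 = ∑ l, ‖toLp 2 (f l)‖ ^ 2 := by
  have h := he.vinner_sum_prodVec f f
  simp only [vinner_self_eq_norm_sq] at h
  exact_mod_cast h

theorem norm_vinner_sum_prodVec_sq_le (he : Orthonormal' e) {σ : Type*} [Fintype σ]
    [DecidableEq σ] (a : σ → ι → ℂ) {b : σ → κ → ℂ} (hb : Orthonormal' b) (f : τ → κ → ℂ)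
    (c : σ → ℂ) :
    ‖vinner (∑ l, prodVec (e l) (f l)) (∑ i, c i • prodVec (a i) (b i))‖ ^ 2 ≤
      ‖toLp 2 (∑ l, prodVec (e l) (f l))‖ ^ 2 *
        ∑ i, (∑ l, ‖vinner (e l) (a i)‖ ^ 2) * ‖c i‖ ^ 2 := by
  -- The second vector, compressed to the span of `e` in the left factor, is `∑ e l ⊗ g l`.
  let g : τ → κ → ℂ := fun l => ∑ i, (c i * vinner (e l) (a i)) • b i
  have compress : vinner (∑ l, prodVec (e l) (f l)) (∑ i, c i • prodVec (a i) (b i)) =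
      vinner (∑ l, prodVec (e l) (f l)) (∑ l, prodVec (e l) (g l)) := by
    rw [he.vinner_sum_prodVec, vinner_sum_left]
    simp only [g, vinner_sum_right, vinner_smul_right, vinner_prodVec, mul_assoc]
  have norm_g : ‖toLp 2 (∑ l, prodVec (e l) (g l))‖ ^ 2 =
      ∑ i, (∑ l, ‖vinner (e l) (a i)‖ ^ 2) * ‖c i‖ ^ 2 := by
    simp only [he.norm_sum_prodVec_sq, g, hb.norm_sum_smul_sq, norm_mul, mul_pow]
    rw [Finset.sum_comm]
    simp only [Finset.mul_sum, mul_comm]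
  rw [compress, ← norm_g, ← mul_pow]
  exact pow_le_pow_left₀ (norm_nonneg _) (norm_vinner_le _ _) 2

end Orthonormal'

namespace SchmidtRankLE

theorem smul {ι κ : Type*} {k : ℕ} {u : ι × κ → ℂ} (hu : SchmidtRankLE k u) (c : ℂ) :
    SchmidtRankLE k (c • u) := by
  obtain ⟨a, b, rfl⟩ := hu
  exact ⟨fun i => c • a i, b, by simp only [Finset.smul_sum, smul_prodVec]⟩

theorem sum_smul_prodVec {ι κ σ : Type*} (s : Finset σ) (c : σ → ℂ) (a : σ → ι → ℂ)
    (b : σ → κ → ℂ) : SchmidtRankLE s.card (∑ i ∈ s, c i • prodVec (a i) (b i)) := by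
  refine ⟨fun j => c (s.equivFin.symm j) • a (s.equivFin.symm j),
    fun j => b (s.equivFin.symm j), ?_⟩
  simp only [smul_prodVec]
  rw [← Finset.sum_coe_sort, ← s.equivFin.symm.sum_comp]

theorem exists_orthonormal {κ : Type*} {k : ℕ} {u : ι × κ → ℂ} (hu : SchmidtRankLE k u) :
    ∃ (s : ℕ) (e : Fin s → ι → ℂ) (f : Fin s → κ → ℂ), s ≤ k ∧ Orthonormal' e ∧
      u = ∑ l, prodVec (e l) (f l) := by
  obtain ⟨c, d, rfl⟩ := hu
  let V : Submodule ℂ (EuclideanSpace ℂ ι) := Submodule.span ℂ (Set.range fun j => toLp 2 (c j))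
  let B := stdOrthonormalBasis ℂ V
  let c' : Fin k → V := fun j => ⟨toLp 2 (c j), Submodule.subset_span ⟨j, rfl⟩⟩
  refine ⟨Module.finrank ℂ V, fun l => (B l : EuclideanSpace ℂ ι).ofLp,
    fun l => ∑ j, inner ℂ (B l) (c' j) • d j, ?_, fun i j => ?_, ?_⟩
  · exact (finrank_range_le_card _).trans_eq (Fintype.card_fin k)
  · rw [vinner_eq_inner]
    exact orthonormal_iff_ite.1 B.orthonormal i j
  · have expand : ∀ j x, c j x = ∑ l, inner ℂ (B l) (c' j) * (B l : EuclideanSpace ℂ ι) x := by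
      intro j x
      have h := congrArg (fun y : V => (y : EuclideanSpace ℂ ι) x) (B.sum_repr' (c' j))
      simpa [c'] using h.symm
    ext p
    simp only [Finset.sum_apply, prodVec, Pi.smul_apply, smul_eq_mul, expand, Finset.sum_mul,
      Finset.mul_sum]
    rw [Finset.sum_comm]
    simp only [mul_assoc, mul_left_comm]

theorem exists_weights_norm_vinner_sq_le {k : ℕ} {u : ι × κ → ℂ} (hu : SchmidtRankLE k u)
    {σ : Type*} [Fintype σ] [DecidableEq σ] {a : σ → ι → ℂ} {b : σ → κ → ℂ}
    (ha : Orthonormal' a) (hb : Orthonormal' b) :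
    ∃ x : σ → ℝ, (∀ i, 0 ≤ x i) ∧ (∀ i, x i ≤ 1) ∧ ∑ i, x i ≤ k ∧ ∀ c : σ → ℂ,
      ‖vinner u (∑ i, c i • prodVec (a i) (b i))‖ ^ 2 ≤
        ‖toLp 2 u‖ ^ 2 * ∑ i, x i * ‖c i‖ ^ 2 := by
  obtain ⟨s, e, f, hs, he, rfl⟩ := hu.exists_orthonormal
  refine ⟨fun i => ∑ l, ‖vinner (e l) (a i)‖ ^ 2, fun i => by positivity, fun i => ?_, ?_,
    he.norm_vinner_sum_prodVec_sq_le a hb f⟩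
  · simpa [ha.norm_eq_one i] using he.sum_norm_vinner_sq_le Finset.univ (a i)
  · calc ∑ i, ∑ l, ‖vinner (e l) (a i)‖ ^ 2
        = ∑ l, ∑ i, ‖vinner (a i) (e l)‖ ^ 2 := by
          rw [Finset.sum_comm]
          simp only [norm_vinner_comm]
      _ ≤ ∑ _l : Fin s, (1 : ℝ) := Finset.sum_le_sum fun l _ => by
          simpa [he.norm_eq_one l] using ha.sum_norm_vinner_sq_le Finset.univ (e l)
      _ ≤ k := by simpa using hs

end SchmidtRankLE

section SkVecNorm

variable {k : ℕ}

theorem skVecNorm_le {w : ι × κ → ℂ} {M : ℝ} (hM : 0 ≤ M)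
    (h : ∀ u, ‖toLp 2 u‖ = 1 → SchmidtRankLE k u → ‖vinner u w‖ ≤ M) : skVecNorm k w ≤ M := by
  refine Real.sSup_le ?_ hM
  rintro _ ⟨u, hu1, hu, rfl⟩
  exact h u (vinner_self_eq_one_iff.1 hu1) hu

theorem norm_vinner_le_skVecNorm {u : ι × κ → ℂ} (hu1 : ‖toLp 2 u‖ = 1)
    (hu : SchmidtRankLE k u) (w : ι × κ → ℂ) : ‖vinner u w‖ ≤ skVecNorm k w := by
  refine le_csSup ⟨‖toLp 2 w‖, ?_⟩ ⟨u, vinner_self_eq_one_iff.2 hu1, hu, rfl⟩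
  rintro _ ⟨u, hu1, -, rfl⟩
  simpa [vinner_self_eq_one_iff.1 hu1] using norm_vinner_le u w

theorem norm_vinner_le_norm_mul_skVecNorm {u : ι × κ → ℂ} (hu : SchmidtRankLE k u)
    (w : ι × κ → ℂ) : ‖vinner u w‖ ≤ ‖toLp 2 u‖ * skVecNorm k w := by
  rcases eq_or_ne ‖toLp 2 u‖ 0 with h0 | hne
  · simpa [h0] using norm_vinner_le u w
  · have hunit : ‖toLp 2 ((‖toLp 2 u‖⁻¹ : ℂ) • u)‖ = 1 := by
      simp [WithLp.toLp_smul, norm_smul, hne]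
    have h := norm_vinner_le_skVecNorm hunit (hu.smul _) w
    rw [vinner_smul_left, norm_mul, norm_star, norm_inv, Complex.norm_real, norm_norm] at h
    exact (inv_mul_le_iff₀ (lt_of_le_of_ne (norm_nonneg _) hne.symm)).1 h

end SkVecNorm

section DualNorm

variable {σ : Type*} [Fintype σ] [DecidableEq σ] {a : σ → ι → ℂ} {b : σ → κ → ℂ}
  {H : Finset σ} {α : σ → ℝ} {t : ℝ} {q : ℕ}

theorem norm_vinner_sum_le_of_skVecNorm_le_one (ha : Orthonormal' a) (hb : Orthonormal' b)
    (hq : q ≤ Hᶜ.card) (hα0 : ∀ i ∈ Hᶜ, 0 ≤ α i) (hαt : ∀ i ∈ Hᶜ, α i ≤ t)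
    (hsum : ∑ i ∈ Hᶜ, α i = q * t) {w : ι × κ → ℂ} (hw : skVecNorm (H.card + q) w ≤ 1) :
    ‖vinner w (∑ i, (α i : ℂ) • prodVec (a i) (b i))‖ ≤
      √(∑ i ∈ H, α i ^ 2 + q * t ^ 2) := by
  -- A phase `c` making the pairing real, so that the real rearrangement bound applies.
  obtain ⟨c, hc, hcv⟩ := RCLike.exists_norm_eq_mul_self
    (vinner w (∑ i, (α i : ℂ) • prodVec (a i) (b i)))
  let z : σ → ℝ := fun i => (c * vinner w (prodVec (a i) (b i))).re
  have re_eq : ∀ (s : Finset σ) (γ : σ → ℝ),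
      (c * vinner w (∑ i ∈ s, (γ i : ℂ) • prodVec (a i) (b i))).re = ∑ i ∈ s, γ i * z i := by
    intro s γ
    simp only [z, vinner_sum_right, vinner_smul_right, Finset.mul_sum, Complex.re_sum,
      mul_left_comm c, Complex.re_ofReal_mul]
  obtain ⟨s, hHs, hcard, hle⟩ := exists_sum_mul_le_sum_piecewise_const hq hα0 hαt hsum z
  let β : σ → ℝ := H.piecewise α fun _ => t
  let u : ι × κ → ℂ := ∑ i ∈ s, (β i : ℂ) • prodVec (a i) (b i)
  have hu : SchmidtRankLE (H.card + q) u :=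
    hcard ▸ SchmidtRankLE.sum_smul_prodVec s (fun i => (β i : ℂ)) a b
  have norm_u : ‖toLp 2 u‖ = √(∑ i ∈ H, α i ^ 2 + q * t ^ 2) := by
    rw [← sum_piecewise_const_sq hHs hcard, eq_comm, Real.sqrt_eq_iff_eq_sq (by positivity)
      (norm_nonneg _), (ha.prodVec hb).norm_sum_smul_sq]
    simp only [Complex.norm_real, Real.norm_eq_abs, sq_abs, β]
  calc ‖vinner w (∑ i, (α i : ℂ) • prodVec (a i) (b i))‖
      = ∑ i, α i * z i := by rw [← re_eq, ← hcv]; exact (Complex.ofReal_re _).symm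
    _ ≤ ∑ i ∈ s, β i * z i := hle
    _ = (c * vinner w u).re := (re_eq s β).symm
    _ ≤ ‖vinner w u‖ := (Complex.re_le_norm _).trans (by rw [norm_mul, hc, one_mul])
    _ ≤ ‖toLp 2 u‖ * skVecNorm (H.card + q) w := by
      rw [norm_vinner_comm]
      exact norm_vinner_le_norm_mul_skVecNorm hu w
    _ ≤ √(∑ i ∈ H, α i ^ 2 + q * t ^ 2) := by
      rw [norm_u]
      exact mul_le_of_le_one_right (Real.sqrt_nonneg _) hw

theorem norm_vinner_sum_piecewise_const_le (ha : Orthonormal' a) (hb : Orthonormal' b)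
    (ht : 0 ≤ t) (htα : ∀ i ∈ H, t ≤ α i) {u : ι × κ → ℂ} (hu1 : ‖toLp 2 u‖ = 1)
    (hu : SchmidtRankLE (H.card + q) u) :
    ‖vinner u (∑ i, (H.piecewise α (fun _ => t) i : ℂ) • prodVec (a i) (b i))‖ ≤
      √(∑ i ∈ H, α i ^ 2 + q * t ^ 2) := by
  obtain ⟨x, hx0, hx1, hxsum, hx⟩ := hu.exists_weights_norm_vinner_sq_le ha hb
  refine Real.le_sqrt_of_sq_le ((hx _).trans ?_)
  simpa only [hu1, one_pow, one_mul, Complex.norm_real, Real.norm_eq_abs, sq_abs] using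
    sum_mul_piecewise_const_sq_le hx0 hx1 (by exact_mod_cast hxsum) ht htα

theorem dualNormV_skVecNorm_sum_prodVec (ha : Orthonormal' a) (hb : Orthonormal' b)
    {k : ℕ} (hk : k = H.card + q) (hq : q ≤ Hᶜ.card) (ht : 0 ≤ t) (htα : ∀ i ∈ H, t ≤ α i)
    (hα0 : ∀ i ∈ Hᶜ, 0 ≤ α i) (hαt : ∀ i ∈ Hᶜ, α i ≤ t) (hsum : ∑ i ∈ Hᶜ, α i = q * t) :
    dualNormV (skVecNorm k) (∑ i, (α i : ℂ) • prodVec (a i) (b i)) =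
      √(∑ i ∈ H, α i ^ 2 + q * t ^ 2) := by
  subst hk
  set F := ∑ i ∈ H, α i ^ 2 + q * t ^ 2
  have hF : 0 ≤ F := by positivity
  let β : σ → ℝ := H.piecewise α fun _ => t
  -- If `F = 0` then `(√F)⁻¹ = 0`, and the witness `0` is still optimal.
  let w : ι × κ → ℂ := ((√F)⁻¹ : ℂ) • ∑ i, (β i : ℂ) • prodVec (a i) (b i)
  have norm_scale : ‖((√F)⁻¹ : ℂ)‖ = (√F)⁻¹ := by
    rw [norm_inv, Complex.norm_real, Real.norm_of_nonneg (Real.sqrt_nonneg F)]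
  have hw : skVecNorm (H.card + q) w ≤ 1 := skVecNorm_le zero_le_one fun u hu1 hu => by
    rw [vinner_smul_right, norm_mul, norm_scale]
    exact inv_mul_le_one_of_le₀ (norm_vinner_sum_piecewise_const_le ha hb ht htα hu1 hu)
      (Real.sqrt_nonneg F)
  have hwv : √F = ‖vinner w (∑ i, (α i : ℂ) • prodVec (a i) (b i))‖ := by
    have pairing : ∑ i, star (β i : ℂ) * (α i : ℂ) = (F : ℂ) := by
      simp only [RCLike.star_def, Complex.conj_ofReal]
      exact_mod_cast sum_piecewise_const_mul_self hsum
    rw [vinner_smul_left, (ha.prodVec hb).vinner_sum_smul, pairing, norm_mul, norm_star,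
      norm_scale, Complex.norm_real, Real.norm_of_nonneg hF, inv_mul_eq_div, Real.div_sqrt]
  refine IsGreatest.csSup_eq ⟨⟨w, hw, hwv⟩, ?_⟩
  rintro _ ⟨w', hw', rfl⟩
  exact norm_vinner_sum_le_of_skVecNorm_le_one ha hb hq hα0 hαt hsum hw'

end DualNorm

section FinSums

variable {M : Type*} [AddCommMonoid M] {d : ℕ}

theorem sum_Iio_fin (ρ : Fin d) (f : ℕ → M) :
    ∑ i ∈ Finset.Iio ρ, f i = ∑ i ∈ Finset.range ρ, f i := by
  rw [← Nat.Iio_eq_range, ← Fin.map_valEmbedding_Iio, Finset.sum_map]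
  simp only [Fin.valEmbedding_apply]

theorem sum_Ici_fin (ρ : Fin d) (f : ℕ → M) :
    ∑ i ∈ Finset.Ici ρ, f i = ∑ i ∈ Finset.Ico (ρ : ℕ) d, f i := by
  rw [← Fin.map_valEmbedding_Ici, Finset.sum_map]
  simp only [Fin.valEmbedding_apply]

end FinSums

theorem le_sum_Ico_div_of_le_sum_Ico_succ_div {K : Type*} [Field K] [LinearOrder K]
    [IsStrictOrderedRing K] {d k r : ℕ} {α : ℕ → K} (hkd : k ≤ d) (hα0 : ∀ i < d, 0 ≤ α i)
    (hrk : r < k)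
    (hsucc : r + 1 < k → α r ≤ (∑ i ∈ Finset.Ico (r + 1) d, α i) / (k - (r + 1 : ℕ))) :
    α r ≤ (∑ i ∈ Finset.Ico r d, α i) / (k - r) := by
  have hkr : (r : K) < k := by exact_mod_cast hrk
  rw [le_div_iff₀ (sub_pos.2 hkr), Finset.sum_eq_sum_Ico_succ_bot (hrk.trans_le hkd)]
  rcases Nat.lt_or_eq_of_le (Nat.succ_le_of_lt hrk) with hlt | rfl
  · have hkr' : ((r + 1 : ℕ) : K) < k := by exact_mod_cast hlt
    have h := (le_div_iff₀ (sub_pos.2 hkr')).1 (hsucc hlt)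
    push_cast at h
    linarith
  · have htail : 0 ≤ ∑ i ∈ Finset.Ico (r + 1) d, α i :=
      Finset.sum_nonneg fun i hi => hα0 i (Finset.mem_Ico.1 hi).2
    push_cast
    linarith

theorem dual_skVecNorm_of_vector_general {d k : ℕ} (hk : k ≤ d) (v : ι × κ → ℂ)
    (α : ℕ → ℝ) (a : ℕ → ι → ℂ) (b : ℕ → κ → ℂ)
    (hα0 : ∀ i, i < d → 0 ≤ α i) (hαmono : ∀ i j, i ≤ j → j < d → α j ≤ α i)
    (ha : ∀ i j, i < d → j < d → vinner (a i) (a j) = if i = j then 1 else 0)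
    (hb : ∀ i j, i < d → j < d → vinner (b i) (b j) = if i = j then 1 else 0)
    (hdec : v = ∑ i ∈ Finset.range d, α i • prodVec (a i) (b i))
    (r : ℕ) (hrk : r < k)
    (hr : 1 ≤ r → (∑ i ∈ Finset.Ico r d, α i) / ((k : ℝ) - r) < α (r - 1))
    (hrmax : ∀ j, r < j → j < k →
      ¬ ((∑ i ∈ Finset.Ico j d, α i) / ((k : ℝ) - j) < α (j - 1))) :
    dualNormV (skVecNorm k) v =
      √(∑ i ∈ Finset.range r, α i ^ 2 +
        ((k : ℝ) - r) * ((∑ i ∈ Finset.Ico r d, α i) / ((k : ℝ) - r)) ^ 2) := by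
  have hkr : (0 : ℝ) < k - r := sub_pos.2 (by exact_mod_cast hrk)
  have hrd : r < d := hrk.trans_le hk
  let t := (∑ i ∈ Finset.Ico r d, α i) / ((k : ℝ) - r)
  have hrt : α r ≤ t := le_sum_Ico_div_of_le_sum_Ico_succ_div hk hα0 hrk fun hlt =>
    not_lt.1 (hrmax (r + 1) r.lt_succ_self hlt)
  let ρ : Fin d := ⟨r, hrd⟩
  have hcompl : (Finset.Iio ρ)ᶜ = Finset.Ici ρ := by ext; simp
  have head_ge : ∀ i ∈ Finset.Iio ρ, t ≤ α i := fun i hi => by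
    have hir : i.val < r := Fin.lt_def.1 (Finset.mem_Iio.1 hi)
    exact (hr (by lia)).le.trans (hαmono i (r - 1) (by lia) (by lia))
  have tail_le : ∀ i ∈ (Finset.Iio ρ)ᶜ, α i ≤ t := fun i hi => by
    have hri : r ≤ i.val := Fin.le_def.1 (Finset.mem_Ici.1 (hcompl ▸ hi))
    exact (hαmono r i hri i.2).trans hrt
  have tail_sum : ∑ i ∈ (Finset.Iio ρ)ᶜ, α i = (k - r : ℕ) * t := by
    rw [hcompl, sum_Ici_fin, Nat.cast_sub hrk.le, mul_div_cancel₀ _ hkr.ne']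
  have hvec : v = ∑ i : Fin d, (α i : ℂ) • prodVec (a i) (b i) := by
    simp only [hdec, Finset.sum_range, Complex.coe_smul]
  have ha' : Orthonormal' fun i : Fin d => a i := fun i j => by
    simp only [ha i j i.2 j.2, Fin.ext_iff]
  have hb' : Orthonormal' fun i : Fin d => b i := fun i j => by
    simp only [hb i j i.2 j.2, Fin.ext_iff]
  rw [hvec, dualNormV_skVecNorm_sum_prodVec ha' hb' (by rw [Fin.card_Iio]; lia)
    (by rw [hcompl, Fin.card_Ici]; lia) ((hα0 r hrd).trans hrt) head_ge (fun i _ => hα0 i i.2)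
    tail_le tail_sum, sum_Iio_fin ρ fun i => α i ^ 2, Nat.cast_sub hrk.le]

/-- for a unit vector `v` with Schmidt coefficients
`α 0 ≥ α 1 ≥ ⋯ ≥ α (min m n - 1) ≥ 0` (presented via a Schmidt decomposition; the 0-based
`α i` is the paper's `α_{i+1}`), with `r` and `α̃` as in the paper, the dual of the s(k)
vector norm satisfies `‖v‖_{s(k)}° = sqrt(Σ_{i=1}^r α_i² + (k-r)·α̃²)`. -/
theorem dual_skVecNorm_of_vector {m n k : ℕ} (hk1 : 1 ≤ k) (hk : k ≤ min m n)
    (v : Fin m × Fin n → ℂ) (hv : vinner v v = 1)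
    (α : ℕ → ℝ) (a : ℕ → Fin m → ℂ) (b : ℕ → Fin n → ℂ)
    (hα0 : ∀ i, i < min m n → 0 ≤ α i)
    (hαmono : ∀ i j, i ≤ j → j < min m n → α j ≤ α i)
    (ha : ∀ i j, i < min m n → j < min m n → vinner (a i) (a j) = if i = j then 1 else 0)
    (hb : ∀ i j, i < min m n → j < min m n → vinner (b i) (b j) = if i = j then 1 else 0)
    (hdec : v = ∑ i ∈ Finset.range (min m n), α i • prodVec (a i) (b i))
    (r : ℕ) (hrk : r < k)
    (hr : 1 ≤ r → (∑ i ∈ Finset.Ico r (min m n), α i) / ((k : ℝ) - r) < α (r - 1))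
    (hrmax : ∀ j, r < j → j < k →
      ¬ ((∑ i ∈ Finset.Ico j (min m n), α i) / ((k : ℝ) - j) < α (j - 1))) :
    dualNormV (skVecNorm k) v =
      Real.sqrt ((∑ i ∈ Finset.range r, α i ^ 2) +
        ((k : ℝ) - r) * ((∑ i ∈ Finset.Ico r (min m n), α i) / ((k : ℝ) - r)) ^ 2) := by
  exact dual_skVecNorm_of_vector_general hk v α a b hα0 hαmono ha hb hdec r hrk hr hrmax

end Ent
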